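/- Let I ⊆ ℝ be a nondegenerate interval, n ∈ ℕ, and let ω be an n-dimensional positive Chebyshev system over I. A function f : I → ℝ is ω-convex on I if and only if, for every p ∈ I, there exists a neighborhood U of p such that f is ω-convex on U ∩ I; that is, ω-convexity is a localizable property. -/

import Mathlib

/-- `Phi ω x` is the determinant `det(ωᵢ(xⱼ))` of an `n`-tuple of functions
evaluated at an `n`-tuple of points. -/
noncomputable def Phi {n : ℕ} (ω : Fin n → ℝ → ℝ) (x : Fin n → ℝ) : ℝ :=
  (Matrix.of fun i j => ω i (x j)).det

/-- `ω` is an `n`-dimensional positive Chebyshev system over `H`: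
`Phi ω` is positive on all strictly increasing `n`-tuples of elements of `H`. -/
def IsPosChebyshev {n : ℕ} (ω : Fin n → ℝ → ℝ) (H : Set ℝ) : Prop :=
  ∀ x : Fin n → ℝ, StrictMono x → (∀ j, x j ∈ H) → 0 < Phi ω x

/-- `f` is `ω`-convex on `S`: `Φ_{(ω,f)}(x₀,…,xₙ) ≥ 0` for every strictly
increasing `(n+1)`-tuple of elements of `S`. -/
def OmegaConvexOn {n : ℕ} (ω : Fin n → ℝ → ℝ) (S : Set ℝ) (f : ℝ → ℝ) : Prop :=
  ∀ x : Fin (n + 1) → ℝ, StrictMono x → (∀ j, x j ∈ S) → 0 ≤ Phi (Fin.snoc ω f) x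


theorem Phi_snoc_expand {n : ℕ} (ω : Fin n → ℝ → ℝ) (f : ℝ → ℝ) (x : Fin (n + 1) → ℝ) :
    Phi (Fin.snoc ω f : Fin (n + 1) → ℝ → ℝ) x =
      ∑ j : Fin (n + 1), (-1 : ℝ) ^ (n + (j : ℕ)) * f (x j) * Phi ω (fun i => x (j.succAbove i)) := by
  unfold Phi
  rw [Matrix.det_succ_row _ (Fin.last n)]
  refine Finset.sum_congr rfl fun j _ => ?_
  congr 1
  · simp
  · congr 1
    ext a b
    simp [Matrix.submatrix]

theorem Phi_snoc_self {n : ℕ} (ω : Fin n → ℝ → ℝ) (i : Fin n) (x : Fin (n + 1) → ℝ) :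
    Phi (Fin.snoc ω (ω i) : Fin (n + 1) → ℝ → ℝ) x = 0 := by
  unfold Phi
  apply Matrix.det_zero_of_row_eq (i := i.castSucc) (j := Fin.last n) (Fin.castSucc_lt_last i).ne
  ext b
  simp

theorem Phi_snoc_sub {n : ℕ} (ω : Fin n → ℝ → ℝ) (f : ℝ → ℝ) (c : Fin n → ℝ)
    (x : Fin (n + 1) → ℝ) :
    Phi (Fin.snoc ω (fun t => f t - ∑ i, c i * ω i t) : Fin (n + 1) → ℝ → ℝ) x =
      Phi (Fin.snoc ω f : Fin (n + 1) → ℝ → ℝ) x := by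
  have h : ∑ i, c i * Phi (Fin.snoc ω (ω i) : Fin (n + 1) → ℝ → ℝ) x = 0 := by
    simp [Phi_snoc_self]
  simp only [Phi_snoc_expand] at h ⊢
  rw [← sub_zero (∑ j : Fin (n + 1), (-1 : ℝ) ^ (n + (j : ℕ)) * f (x j) * _), ← h]
  simp_rw [Finset.mul_sum]
  rw [Finset.sum_comm, ← Finset.sum_sub_distrib]
  refine Finset.sum_congr rfl fun j _ => ?_
  rw [mul_sub, sub_mul, Finset.mul_sum, Finset.sum_mul]
  congr 1
  refine Finset.sum_congr rfl fun i _ => ?_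
  ring

theorem exists_interp {n : ℕ} (ω : Fin n → ℝ → ℝ) (f : ℝ → ℝ) (m : Fin n → ℝ)
    (h : Phi ω m ≠ 0) : ∃ c : Fin n → ℝ, ∀ j, f (m j) - ∑ i, c i * ω i (m j) = 0 := by
  unfold Phi at h
  set A : Matrix (Fin n) (Fin n) ℝ := Matrix.of fun i j => ω i (m j) with hA
  refine ⟨Matrix.vecMul (fun j => f (m j)) A⁻¹, fun j => ?_⟩
  have : Matrix.vecMul (Matrix.vecMul (fun j => f (m j)) A⁻¹) A = fun j => f (m j) := by
    rw [Matrix.vecMul_vecMul, Matrix.nonsing_inv_mul _ (isUnit_iff_ne_zero.mpr h),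
      Matrix.vecMul_one]
  have h2 := congrFun this j
  rw [sub_eq_zero, ← h2]
  simp [Matrix.vecMul, dotProduct, hA]

theorem insertion {n : ℕ} (ω : Fin n → ℝ → ℝ) (I : Set ℝ) (hω : IsPosChebyshev ω I) (f : ℝ → ℝ)
    (Y : Fin (n + 2) → ℝ) (hY : StrictMono Y) (hYI : ∀ j, Y j ∈ I) (k : Fin (n + 2))
    (hk0 : k ≠ 0) (hkl : k ≠ Fin.last (n + 1))
    (h0 : 0 ≤ Phi (Fin.snoc ω f : Fin (n + 1) → ℝ → ℝ) (fun j => Y j.succ))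
    (h1 : 0 ≤ Phi (Fin.snoc ω f : Fin (n + 1) → ℝ → ℝ) (fun j => Y j.castSucc)) :
    0 ≤ Phi (Fin.snoc ω f : Fin (n + 1) → ℝ → ℝ) (fun j => Y (k.succAbove j)) := by
  have hmid : 0 < Phi ω (fun j : Fin n => Y j.castSucc.succ) :=
    hω _ (fun a b hab => hY (by simpa using hab)) (fun j => hYI _)
  obtain ⟨c, hc⟩ := exists_interp ω f (fun j : Fin n => Y j.castSucc.succ) hmid.ne'
  rw [← Phi_snoc_sub ω f c] at h0 h1 ⊢
  set g : ℝ → ℝ := fun t => f t - ∑ i, c i * ω i t with hg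
  have hg0 : ∀ i : Fin (n + 2), i ≠ 0 → i ≠ Fin.last (n + 1) → g (Y i) = 0 := by
    intro i hi0 hil
    obtain ⟨j, rfl⟩ := Fin.exists_succ_eq.mpr hi0
    have : j ≠ Fin.last n := by
      rintro rfl; exact hil (by simp)
    obtain ⟨l, rfl⟩ := Fin.exists_castSucc_eq.mpr this
    exact hc l
  have e0 : 0 ≤ g (Y (Fin.last (n + 1))) := by
    rw [Phi_snoc_expand, Finset.sum_eq_single (Fin.last n)] at h0
    · have hs : (-1 : ℝ) ^ (n + ((Fin.last n : Fin (n + 1)) : ℕ)) = 1 := by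
        simp [← two_mul, pow_mul]
      rw [hs, one_mul] at h0
      simp only [Fin.succAbove_last, Fin.succ_last] at h0
      exact nonneg_of_mul_nonneg_left h0 hmid
    · intro b _ hb
      rw [hg0 b.succ (Fin.succ_ne_zero b) (by rw [← Fin.succ_last]; simpa using hb)]
      simp
    · simp
  have e1 : 0 ≤ (-1 : ℝ) ^ n * g (Y 0) := by
    rw [Phi_snoc_expand, Finset.sum_eq_single 0] at h1
    · simp only [Fin.succAbove_zero, Fin.castSucc_zero, Fin.val_zero, add_zero] at h1
      exact nonneg_of_mul_nonneg_left h1 hmid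
    · intro b _ hb
      rw [hg0 b.castSucc (by simpa using hb) (Fin.castSucc_lt_last b).ne]
      simp
    · simp
  rw [Phi_snoc_expand]
  refine Finset.sum_nonneg fun j _ => ?_
  have hP : 0 ≤ Phi ω (fun i => Y (k.succAbove (j.succAbove i))) :=
    (hω _ (hY.comp ((Fin.strictMono_succAbove k).comp (Fin.strictMono_succAbove j)))
      (fun j => hYI _)).le
  refine mul_nonneg ?_ hP
  by_cases hj0 : j = 0
  · subst hj0
    rw [Fin.succAbove_ne_zero_zero hk0]
    simpa using e1
  by_cases hjl : j = Fin.last n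
  · subst hjl
    rw [Fin.succAbove_ne_last_last hkl]
    simpa [← two_mul, pow_mul] using e0
  · rw [hg0 _ (Fin.succAbove_ne_zero hk0 hj0) (Fin.succAbove_ne_last hkl hjl)]
    simp

theorem strictMono_insert {n : ℕ} (t : Fin (n + 1) → ℝ) (ht : StrictMono t) (j : Fin n) (y : ℝ)
    (h1 : t j.castSucc < y) (h2 : y < t j.succ) :
    StrictMono (Fin.insertNth (α := fun _ => ℝ) j.succ.castSucc y t) := by
  have hlt : ∀ a : Fin (n + 1), (j.succ.castSucc : Fin (n + 2)).succAbove a < j.succ.castSucc →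
      t a < y := by
    intro a ha
    rw [Fin.succAbove_lt_iff_castSucc_lt] at ha
    refine lt_of_le_of_lt (ht.monotone ?_) h1
    simp only [Fin.lt_def, Fin.le_def, Fin.val_castSucc, Fin.val_succ] at ha ⊢
    omega
  have hgt : ∀ a : Fin (n + 1), (j.succ.castSucc : Fin (n + 2)) < 
      (j.succ.castSucc : Fin (n + 2)).succAbove a → y < t a := by
    intro a ha
    rw [Fin.lt_succAbove_iff_le_castSucc] at ha
    refine lt_of_lt_of_le h2 (ht.monotone ?_)
    simp only [Fin.le_def, Fin.val_castSucc, Fin.val_succ] at ha ⊢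
    omega
  intro a b hab
  induction a using Fin.succAboveCases (j.succ.castSucc : Fin (n + 2)) with
  | x =>
    induction b using Fin.succAboveCases (j.succ.castSucc : Fin (n + 2)) with
    | x => exact absurd hab (lt_irrefl _)
    | p b => simpa using hgt b hab
  | p a =>
    induction b using Fin.succAboveCases (j.succ.castSucc : Fin (n + 2)) with
    | x => simpa using hlt a hab
    | p b => 
      simp only [Fin.insertNth_apply_succAbove]
      exact ht ((Fin.strictMono_succAbove _).lt_iff_lt.mp hab)

theorem exists_gap {n : ℕ} (t : Fin (n + 1) → ℝ) (h : ℝ)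
    (hgap : n * h < t (Fin.last n) - t 0) : ∃ j : Fin n, h < t j.succ - t j.castSucc := by
  by_contra! hc
  have : ∀ i : Fin (n + 1), t i - t 0 ≤ (i : ℕ) * h := by
    intro i
    induction i using Fin.induction with
    | zero => simp
    | succ i ih =>
      have := hc i
      simp only [Fin.val_castSucc, Fin.val_succ] at *
      push_cast
      linarith
  have := this (Fin.last n)
  simp at this
  linarith

theorem exists_grid (a b h : ℝ) (hh : 0 < h) : ∃ G : Finset ℝ, ∀ u v, a ≤ u → v ≤ b →
    h < v - u → ∃ g ∈ G, u < g ∧ g < v := by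
  classical
  refine ⟨(Finset.range (⌊(b - a) / h⌋₊ + 2)).image (fun i : ℕ => a + i * h), ?_⟩
  intro u v hu hv huv
  have h0 : 0 ≤ (u - a) / h := div_nonneg (by linarith) hh.le
  have l1 := Nat.floor_le h0
  have l2 := Nat.lt_floor_add_one ((u - a) / h)
  rw [le_div_iff₀ hh] at l1
  rw [div_lt_iff₀ hh] at l2
  refine ⟨a + ((⌊(u - a) / h⌋₊ + 1 : ℕ) : ℝ) * h, Finset.mem_image.mpr ⟨_, ?_, rfl⟩, ?_, ?_⟩
  · rw [Finset.mem_range]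
    have : ⌊(u - a) / h⌋₊ ≤ ⌊(b - a) / h⌋₊ := by
      apply Nat.floor_mono
      gcongr
      linarith
    omega
  · push_cast; linarith
  · push_cast; linarith

theorem descent {n : ℕ} (ω : Fin n → ℝ → ℝ) (I : Set ℝ) (hI : I.OrdConnected)
    (hω : IsPosChebyshev ω I) (f : ℝ → ℝ) (a b δ h : ℝ) (ha : a ∈ I) (hb : b ∈ I)
    (hnh : n * h < δ) (G : Finset ℝ)
    (hG : ∀ u v, a ≤ u → v ≤ b → h < v - u → ∃ g ∈ G, u < g ∧ g < v)
    (hloc : ∀ t : Fin (n + 1) → ℝ, StrictMono t → (∀ j, t j ∈ Set.Icc a b) →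
      t (Fin.last n) - t 0 < δ → 0 ≤ Phi (Fin.snoc ω f : Fin (n + 1) → ℝ → ℝ) t) :
    ∀ (N : ℕ) (t : Fin (n + 1) → ℝ), StrictMono t → (∀ j, t j ∈ Set.Icc a b) → (∀ j, t j ∈ G) →
      (G.filter (fun g => t 0 ≤ g ∧ g ≤ t (Fin.last n))).card = N →
      0 ≤ Phi (Fin.snoc ω f : Fin (n + 1) → ℝ → ℝ) t := by
  intro N
  induction N using Nat.strong_induction_on with
  | _ N ih =>
  intro t ht htI htG hN
  by_cases hd : t (Fin.last n) - t 0 < δ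
  · exact hloc t ht htI hd
  obtain ⟨j, hj⟩ := exists_gap t h (lt_of_lt_of_le hnh (not_lt.mp hd))
  obtain ⟨y, hyG, hy1, hy2⟩ := hG _ _ (htI _).1 (htI _).2 hj
  have hY := strictMono_insert t ht j y hy1 hy2
  set k : Fin (n + 2) := j.succ.castSucc with hk
  set Y : Fin (n + 2) → ℝ := Fin.insertNth (α := fun _ => ℝ) k y t with hYdef
  have hYt : ∀ i, Y (k.succAbove i) = t i := fun i => by simp [hYdef]
  have hk0 : k ≠ 0 := by simp [hk]
  have hkl : k ≠ Fin.last (n + 1) := (Fin.castSucc_lt_last _).ne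
  have hall : ∀ i, Y i ∈ Set.Icc a b ∧ Y i ∈ G := by
    intro i
    induction i using Fin.succAboveCases k with
    | x =>
      have : Y k = y := by simp [hYdef]
      rw [this]
      exact ⟨⟨(htI _).1.trans hy1.le, hy2.le.trans (htI _).2⟩, hyG⟩
    | p i => rw [hYt]; exact ⟨htI i, htG i⟩
  have hY0 : Y 0 = t 0 := by rw [← hYt 0, Fin.succAbove_ne_zero_zero hk0]
  have hYl : Y (Fin.last (n + 1)) = t (Fin.last n) := by
    rw [← hYt (Fin.last n), Fin.succAbove_ne_last_last hkl]
  have key := insertion ω I hω f Y hY (fun i => hI.out ha hb (hall i).1) k hk0 hkl ?_ ?_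
  · simpa only [hYt] using key
  · refine ih _ ?_ (fun j => Y j.succ) (fun p q hpq => hY (by simpa using hpq))
      (fun i => (hall _).1) (fun i => (hall _).2) rfl
    rw [← hN]
    apply Finset.card_lt_card
    rw [Finset.ssubset_iff_of_subset]
    · refine ⟨t 0, ?_, ?_⟩
      · simp only [Finset.mem_filter]
        exact ⟨htG _, le_rfl, ht.monotone (Fin.zero_le _)⟩
      · simp only [Finset.mem_filter, not_and]
        intro _ hle
        have := hY (Fin.succ_pos (0 : Fin (n + 1)))
        linarith
    · intro g hg
      simp only [Finset.mem_filter, Fin.succ_last, hYl] at hg ⊢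
      have := hY (Fin.succ_pos (0 : Fin (n + 1)))
      exact ⟨hg.1, by linarith, hg.2.2⟩
  · refine ih _ ?_ (fun j => Y j.castSucc) (fun p q hpq => hY (by simpa using hpq))
      (fun i => (hall _).1) (fun i => (hall _).2) rfl
    rw [← hN]
    apply Finset.card_lt_card
    have hlt := hY (Fin.castSucc_lt_last (Fin.last n))
    rw [Finset.ssubset_iff_of_subset]
    · refine ⟨t (Fin.last n), ?_, ?_⟩
      · simp only [Finset.mem_filter]
        exact ⟨htG _, ht.monotone (Fin.zero_le _), le_rfl⟩
      · simp only [Finset.mem_filter, not_and]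
        intro _ _ hle
        linarith
    · intro g hg
      simp only [Finset.mem_filter, Fin.castSucc_zero, hY0] at hg ⊢
      exact ⟨hg.1, hg.2.1, by linarith⟩

/-- **Corollary 7 (localizability of ω-convexity).** `f` is `ω`-convex on `I` if and
only if every point `p ∈ I` has a neighborhood `U` such that `f` is `ω`-convex
on `U ∩ I`. -/
theorem omegaConvexOn_iff_locally
    (n : ℕ) (hn : 0 < n) (I : Set ℝ) (hI : I.OrdConnected)
    (hne : ∃ a ∈ I, ∃ b ∈ I, a < b)
    (ω : Fin n → ℝ → ℝ) (hω : IsPosChebyshev ω I) (f : ℝ → ℝ) :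
    OmegaConvexOn ω I f ↔ ∀ p ∈ I, ∃ U ∈ nhds p, OmegaConvexOn ω (U ∩ I) f := by
  classical
  constructor
  · intro h p _
    exact ⟨Set.univ, Filter.univ_mem, fun x hx hxI => h x hx (fun j => (hxI j).2)⟩
  intro h x hx hxI
  choose! U hU hUc using h
  have hsub : Set.Icc (x 0) (x (Fin.last n)) ⊆ I := hI.out (hxI _) (hxI _)
  obtain ⟨δ, hδ, hL⟩ := lebesgue_number_lemma_of_metric (c := fun p : I => interior (U p))
    (isCompact_Icc (a := x 0) (b := x (Fin.last n))) (fun _ => isOpen_interior)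
    (fun p hp => Set.mem_iUnion.mpr ⟨⟨p, hsub hp⟩,
      mem_interior_iff_mem_nhds.mpr (hU p (hsub hp))⟩)
  have hh : 0 < δ / (n + 1) := by positivity
  obtain ⟨G, hG⟩ := exists_grid (x 0) (x (Fin.last n)) (δ / (n + 1)) hh
  have hxIcc : ∀ j, x j ∈ Set.Icc (x 0) (x (Fin.last n)) := fun j =>
    ⟨hx.monotone (Fin.zero_le _), hx.monotone (Fin.le_last _)⟩
  refine descent ω I hI hω f (x 0) (x (Fin.last n)) δ (δ / (n + 1)) (hxI _) (hxI _) ?_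
    (G ∪ Finset.univ.image x) ?_ ?_ _ x hx hxIcc (fun j => by simp) rfl
  · rw [mul_div_assoc', div_lt_iff₀ (by positivity)]
    nlinarith
  · intro u v hu hv huv
    obtain ⟨g, hg, hg2⟩ := hG u v hu hv huv
    exact ⟨g, Finset.mem_union_left _ hg, hg2⟩
  · intro t ht htI hd
    obtain ⟨p, hp⟩ := hL (t 0) (htI 0)
    refine hUc p p.2 t ht (fun j => ⟨interior_subset (hp ?_), hsub (htI j)⟩)
    have h1 : t 0 ≤ t j := ht.monotone (Fin.zero_le _)
    have h2 : t j ≤ t (Fin.last n) := ht.monotone (Fin.le_last _)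
    rw [Metric.mem_ball, Real.dist_eq, abs_of_nonneg (by linarith)]
    linarith
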